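/- Run the regularized algorithm where p^{(t+1)} = Proj_{Δ_L}(p^{(t)} − η_p^{(t)} g^{(t)}) with g^{(t)} = f(x^{(t)}) + λ₃(p^{(t)} − q), and the x-update is the proximal gradient step with step sizes η_x^{(t)} ≤ 1/L_h. Suppose ‖g^{(t)}‖₂ ≤ R_g for all t. Then (1/T)·Σ_{t=1}^T ‖x^{(t+1)} − x^{(t)}‖₂² ≤ 2·LR(p^{(0)}, x^{(0)})/(L_h T) + (2 R_g²/(L_h T))·Σ_t ( η_p^{(t)} + λ₃ (η_p^{(t)})²/2 ). -/

import Mathlib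

/-!
The objective `LR` is a Lyapunov function up to the drift of `p`.

* For fixed weights `p t`, the proximal gradient step with `ηx ≤ 1 / Lh` decreases
  `LR (p t) ·` by at least `Lh / 2 * ‖x (t+1) - x t‖²`: the variational inequality of the proximal
  step (`variational_of_min`, applied along segments) is added to the descent inequality given by
  smoothness; `fderiv_smoothPart` identifies the derivative there with `G t`.
* `LR · (x (t+1))` is a quadratic in `p`. Expanded around the *new* point `p (t+1)`, whose gradient is
  `g (t+1)`, it gives
  `LR (p (t+1)) (x (t+1)) - LR (p t) (x (t+1)) = ⟨g (t+1), Δp⟩ - lam3 / 2 * ‖Δp‖²`.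
  Since projecting onto a convex set gives `‖Δp‖ ≤ ηp t * ‖g t‖` (`proj_step_le`), Cauchy–Schwarz bounds
  this by `ηp t * Rg²`. Expanding around `p t` would instead involve `f (x (t+1))` mixed with `p t`,
  on which no bound is assumed.

Telescoping and `LR ≥ 0` give the claim, even without the nonnegative `lam3 * ηp² / 2` terms.
-/

open Set Finset

/-- The ℓ₁ norm on `Fin n → ℝ`. -/
noncomputable def l1norm {n : ℕ} (x : Fin n → ℝ) : ℝ := ∑ i, |x i|

/-- The squared Euclidean norm `‖x‖₂²` on `Fin n → ℝ`. -/
noncomputable def sqnorm {n : ℕ} (x : Fin n → ℝ) : ℝ := ∑ i, (x i) ^ 2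

/-- The probability simplex `Δ_L`. -/
def stdSimplex' (L : ℕ) : Set (Fin L → ℝ) := {p | (∀ i, 0 ≤ p i) ∧ ∑ i, p i = 1}

/-- `g` is `Lg`-strongly smooth. -/
def StronglySmooth {n : ℕ} (g : (Fin n → ℝ) → ℝ) (Lg : ℝ) : Prop :=
  ∀ u v : Fin n → ℝ, g v ≤ g u + fderiv ℝ g u (v - u) + Lg / 2 * sqnorm (u - v)

lemma sqnorm_nonneg {n : ℕ} (v : Fin n → ℝ) : 0 ≤ sqnorm v :=
  Finset.sum_nonneg fun _ _ => sq_nonneg _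

lemma l1norm_nonneg {n : ℕ} (v : Fin n → ℝ) : 0 ≤ l1norm v :=
  Finset.sum_nonneg fun _ _ => abs_nonneg _

lemma sqnorm_sub_smul {n : ℕ} (w d : Fin n → ℝ) (s : ℝ) :
    sqnorm (fun j => w j - s * d j) = sqnorm w - 2 * s * (∑ j, w j * d j) + s ^ 2 * sqnorm d := by
  unfold sqnorm
  rw [Finset.mul_sum, Finset.mul_sum, ← Finset.sum_sub_distrib, ← Finset.sum_add_distrib]
  exact Finset.sum_congr rfl fun j _ => by ring

/-- First-order optimality along a segment: if moving from `w` in direction `-d` by `s` never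
decreases half the squared norm by more than `s * a` for
`0 < s ≤ 1`, then letting `s → 0` gives `⟨w, d⟩ ≤ a`. -/
lemma variational_of_min {n : ℕ} (w d : Fin n → ℝ) (a : ℝ)
    (H : ∀ s : ℝ, 0 < s → s ≤ 1 →
      1 / 2 * sqnorm w ≤ s * a + 1 / 2 * sqnorm (fun j => w j - s * d j)) :
    ∑ j, w j * d j ≤ a := by
  by_contra! hlt
  set c := ∑ j, w j * d j with hc
  have hD := sqnorm_nonneg d
  set D := sqnorm d with hDdef
  -- With `e = c - a > 0`, this `s` makes the quadratic term `s² D / 2` smaller than `s * e`.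
  have he : 0 < c - a := by linarith
  have hden : 0 < c - a + D := by linarith
  have hs : 0 < (c - a) / (c - a + D) := by positivity
  have hs1 : (c - a) / (c - a + D) ≤ 1 := by
    rw [div_le_one hden]; linarith
  have h1 := H _ hs hs1
  rw [sqnorm_sub_smul, ← hc, ← hDdef] at h1
  set s := (c - a) / (c - a + D) with hsdef
  have hsD : s * (c - a + D) = c - a := div_mul_cancel₀ _ hden.ne'
  have h2 : s * D ≤ c - a := by nlinarith [mul_pos hs he]
  nlinarith [mul_pos hs he, mul_le_mul_of_nonneg_left h2 hs.le]

lemma sum_mul_le_of_sqnorm {n : ℕ} (a b : Fin n → ℝ) :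
    ∑ j, a j * b j ≤ √(sqnorm a) * √(sqnorm b) :=
  Real.sum_mul_le_sqrt_mul_sqrt _ _ _

/-- If `w = d + η g` satisfies `⟨w, d⟩ ≤ 0`, then `‖d‖ ≤ η ‖g‖`: the length of a projected
gradient step. -/
lemma step_le {n : ℕ} (d g : Fin n → ℝ) (η : ℝ) (hη : 0 ≤ η)
    (H : ∑ j, (d j + η * g j) * d j ≤ 0) : √(sqnorm d) ≤ η * √(sqnorm g) := by
  have h1 : sqnorm d ≤ η * ∑ j, g j * (-d j) := by
    have : ∑ j, (d j + η * g j) * d j = sqnorm d - η * ∑ j, g j * (-d j) := by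
      unfold sqnorm
      rw [Finset.mul_sum, ← Finset.sum_sub_distrib]
      exact Finset.sum_congr rfl fun j _ => by ring
    linarith
  have h2 := sum_mul_le_of_sqnorm g (fun j => -d j)
  have h3 : sqnorm (fun j => -d j) = sqnorm d := by simp [sqnorm]
  rw [h3] at h2
  have h4 := Real.sq_sqrt (sqnorm_nonneg d)
  have h5 := mul_le_mul_of_nonneg_left h2 hη
  have h6 := Real.sqrt_nonneg (sqnorm d)
  have h7 := Real.sqrt_nonneg (sqnorm g)
  rcases h6.eq_or_lt with h8 | h8
  · rw [← h8]; positivity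
  · refine le_of_mul_le_mul_right ?_ h8
    nlinarith

lemma hasFDerivAt_affine {N : ℕ} (a : Fin N → ℝ) (c : ℝ) (u : Fin N → ℝ) :
    HasFDerivAt (fun x : Fin N → ℝ => c - ∑ j, a j * x j)
      (-∑ j, a j • ContinuousLinearMap.proj (R := ℝ) (φ := fun _ : Fin N => ℝ) j) u := by
  refine (HasFDerivAt.fun_sum fun j _ => ?_).const_sub c
  exact (hasFDerivAt_apply j u).const_mul (a j)

/-- The derivative of the differentiable part of the objective. -/
lemma fderiv_smoothPart {M N L : ℕ} (A : Fin M → Fin N → ℝ) (y : Fin M → ℝ) (lam1 lam2 : ℝ)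
    (h : Fin L → (Fin N → ℝ) → ℝ) (gradh : Fin L → (Fin N → ℝ) → (Fin N → ℝ))
    (hdiff : ∀ i, Differentiable ℝ (h i))
    (hgrad : ∀ i u v, fderiv ℝ (h i) u v = ∑ j, gradh i u j * v j)
    (p : Fin L → ℝ) (u v : Fin N → ℝ) :
    fderiv ℝ (fun x => (∑ i, p i * h i x)
          + lam1 / 2 * sqnorm (fun k => y k - ∑ j, A k j * x j)
          + lam2 / 2 * sqnorm x) u v
      = ∑ j, ((∑ i, p i * gradh i u j)
        + lam1 * ∑ k, A k j * ((∑ j', A k j' * u j') - y k) + lam2 * u j) * v j := by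
  have h1 : HasFDerivAt (fun x => ∑ i, p i * h i x) (∑ i, p i • fderiv ℝ (h i) u) u :=
    HasFDerivAt.fun_sum fun i _ => ((hdiff i u).hasFDerivAt).const_mul (p i)
  have h2 := HasFDerivAt.fun_sum (u := Finset.univ)
    fun k (_ : k ∈ Finset.univ) => (hasFDerivAt_affine (A k) (y k) u).pow 2
  have h3 := HasFDerivAt.fun_sum (u := Finset.univ)
    fun j (_ : j ∈ Finset.univ) =>
      (hasFDerivAt_apply (𝕜 := ℝ) (F' := fun _ : Fin N => ℝ) j u).pow 2
  have h4 := (h1.add (h2.const_mul (lam1 / 2))).add (h3.const_mul (lam2 / 2))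
  have h5 := h4.fderiv
  unfold sqnorm
  refine (congrArg (fun l : (Fin N → ℝ) →L[ℝ] ℝ => l v) h5).trans ?_
  simp only [add_apply, smul_apply,
    _root_.sum_apply, neg_apply, smul_eq_mul,
    ContinuousLinearMap.proj_apply, hgrad, add_mul, Finset.sum_add_distrib]
  congr 1
  · congr 1
    · simp only [Finset.mul_sum, Finset.sum_mul]
      rw [Finset.sum_comm]
      exact Finset.sum_congr rfl fun _ _ => Finset.sum_congr rfl fun _ _ => by ring
    · have : ∀ j, lam1 * (∑ k, A k j * ((∑ j', A k j' * u j') - y k)) * v j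
          = ∑ k, lam1 * (A k j * ((∑ j', A k j' * u j') - y k)) * v j := fun j => by
        rw [Finset.mul_sum, Finset.sum_mul]
      simp only [this]
      rw [Finset.sum_comm, Finset.mul_sum]
      refine Finset.sum_congr rfl fun k _ => ?_
      have : ∀ j, lam1 * (A k j * ((∑ j', A k j' * u j') - y k)) * v j
          = (lam1 * ((∑ j', A k j' * u j') - y k)) * (A k j * v j) := fun j => by ring
      simp only [this]
      rw [← Finset.mul_sum]
      simp
      ring
  · rw [Finset.mul_sum]
    refine Finset.sum_congr rfl fun j _ => ?_
    simp
    ring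

lemma l1norm_segment_le {n : ℕ} (a b : Fin n → ℝ) (s : ℝ) (h0 : 0 ≤ s) (h1 : s ≤ 1) :
    l1norm (fun j => a j - s * (a j - b j)) ≤ (1 - s) * l1norm a + s * l1norm b := by
  unfold l1norm
  rw [Finset.mul_sum, Finset.mul_sum, ← Finset.sum_add_distrib]
  refine Finset.sum_le_sum fun j _ => ?_
  have h2 : a j - s * (a j - b j) = (1 - s) * a j + s * b j := by ring
  beta_reduce
  rw [h2]
  refine (abs_add_le _ _).trans ?_
  rw [abs_mul, abs_mul, abs_of_nonneg h0, abs_of_nonneg (sub_nonneg.2 h1)]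

/-- Variational inequality of a proximal step for the `ℓ₁` norm. -/
lemma prox_ineq {n : ℕ} (x x' G : Fin n → ℝ) (η : ℝ) (hη : 0 < η)
    (H : ∀ z : Fin n → ℝ,
      η * l1norm x' + 1 / 2 * sqnorm (fun j => x' j - (x j - η * G j))
        ≤ η * l1norm z + 1 / 2 * sqnorm (fun j => z j - (x j - η * G j))) :
    sqnorm (x' - x) + η * ∑ j, G j * (x' j - x j) ≤ η * (l1norm x - l1norm x') := by
  have key := variational_of_min (fun j => x' j - (x j - η * G j)) (fun j => x' j - x j)
    (η * (l1norm x - l1norm x')) (fun s hs hs1 => by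
      have h1 := H (fun j => x' j - s * (x' j - x j))
      have h2 := mul_le_mul_of_nonneg_left (l1norm_segment_le x' x s hs.le hs1) hη.le
      have h3 : (fun j => x' j - s * (x' j - x j) - (x j - η * G j))
          = fun j => x' j - (x j - η * G j) - s * (x' j - x j) := by
        funext j; ring
      rw [h3] at h1
      linarith)
  have h4 : sqnorm (x' - x) + η * ∑ j, G j * (x' j - x j)
      = ∑ j, (x' j - (x j - η * G j)) * (x' j - x j) := by
    unfold sqnorm
    rw [Finset.mul_sum, ← Finset.sum_add_distrib]
    exact Finset.sum_congr rfl fun j _ => by simp only [Pi.sub_apply]; ring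
  rw [h4]; exact key

/-- A projected step onto the simplex moves by at most `η ‖g‖`. -/
lemma proj_step_le {L : ℕ} (p p' g : Fin L → ℝ) (η : ℝ) (hη : 0 ≤ η)
    (hp : p ∈ stdSimplex' L) (hp' : p' ∈ stdSimplex' L)
    (H : ∀ z ∈ stdSimplex' L,
      sqnorm (fun i => p' i - (p i - η * g i)) ≤ sqnorm (fun i => z i - (p i - η * g i))) :
    √(sqnorm (fun i => p' i - p i)) ≤ η * √(sqnorm g) := by
  refine step_le _ g η hη ?_
  refine variational_of_min _ _ 0 fun s hs hs1 => ?_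
  have hz : (fun i => p' i - s * (p' i - p i)) ∈ stdSimplex' L := by
    refine ⟨fun i => ?_, ?_⟩
    · have := mul_nonneg hs.le (hp.1 i)
      have := mul_nonneg (sub_nonneg.2 hs1) (hp'.1 i)
      linarith
    · rw [Finset.sum_sub_distrib, ← Finset.mul_sum, Finset.sum_sub_distrib, hp.2, hp'.2]
      ring
  have h1 := H _ hz
  have h2 : (fun i => p' i - s * (p' i - p i) - (p i - η * g i))
      = fun i => p' i - p i + η * g i - s * (p' i - p i) := by funext i; ring
  have h3 : (fun i => p' i - (p i - η * g i)) = fun i => p' i - p i + η * g i := by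
    funext i; ring
  rw [h2, h3] at h1
  linarith

/-- Theorem 5 of the paper: for the regularized algorithm with
`p^{(t+1)} = Proj_{Δ_L}(p^{(t)} − η_p^{(t)} g^{(t)})`, `g^{(t)} = f(x^{(t)}) + λ₃(p^{(t)} − q)`,
and proximal gradient `x`-updates with step sizes `η_x^{(t)} ≤ 1/L_h`, if `‖g^{(t)}‖₂ ≤ R_g`
then `(1/T) Σ_t ‖x^{(t+1)} − x^{(t)}‖₂²
  ≤ 2 LR(p⁰, x⁰)/(L_h T) + (2R_g²/(L_h T)) Σ_t (η_p^{(t)} + λ₃ (η_p^{(t)})²/2)`. -/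
theorem noncvx_prox_regularized_iterate_gap {M N L T : ℕ} (hL : 1 < L) (hT : 0 < T)
    (A : Fin M → Fin N → ℝ) (y : Fin M → ℝ)
    (lam1 lam2 lam3 : ℝ) (hlam1 : 0 < lam1) (hlam2 : 0 < lam2) (hlam3 : 0 < lam3)
    (q : Fin L → ℝ) (hq : q ∈ stdSimplex' L)
    (h : Fin L → (Fin N → ℝ) → ℝ)
    (gradh : Fin L → (Fin N → ℝ) → (Fin N → ℝ))
    (hconv : ∀ i, ConvexOn ℝ Set.univ (h i))
    (hnonneg : ∀ i x, 0 ≤ h i x)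
    (hdiff : ∀ i, Differentiable ℝ (h i))
    (hgrad : ∀ i u v, fderiv ℝ (h i) u v = ∑ j, gradh i u j * v j)
    (f : Fin L → (Fin N → ℝ) → ℝ)
    (hf : ∀ i x, f i x = l1norm x + h i x
        + lam1 / 2 * sqnorm (fun k => y k - ∑ j, A k j * x j)
        + lam2 / 2 * sqnorm x)
    (LRfun : (Fin L → ℝ) → (Fin N → ℝ) → ℝ)
    (hLRfun : ∀ p x, LRfun p x = (∑ i, p i * f i x) + lam3 / 2 * sqnorm (p - q))
    (Lh : ℝ) (hLh : 0 < Lh)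
    (hsmooth : ∀ p ∈ stdSimplex' L,
      StronglySmooth
        (fun x => (∑ i, p i * h i x)
          + lam1 / 2 * sqnorm (fun k => y k - ∑ j, A k j * x j)
          + lam2 / 2 * sqnorm x) Lh)
    -- the algorithm iterates
    (p : ℕ → Fin L → ℝ) (x : ℕ → Fin N → ℝ)
    (ηx ηp : ℕ → ℝ) (Rg : ℝ)
    (hηx : ∀ t, 0 < ηx t) (hηxLh : ∀ t, ηx t ≤ 1 / Lh)
    (hηp : ∀ t, 0 ≤ ηp t)
    (hp0 : p 0 ∈ stdSimplex' L)
    (hx0 : x 0 = 0)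
    (g : ℕ → Fin L → ℝ)
    (hg : ∀ t i, g t i = f i (x t) + lam3 * (p t i - q i))
    (hpupd : ∀ t, p (t + 1) ∈ stdSimplex' L ∧
      ∀ z ∈ stdSimplex' L,
        sqnorm (fun i => p (t + 1) i - (p t i - ηp t * g t i))
          ≤ sqnorm (fun i => z i - (p t i - ηp t * g t i)))
    (G : ℕ → Fin N → ℝ)
    (hG : ∀ t j, G t j = (∑ i, p t i * gradh i (x t) j)
        + lam1 * ∑ k, A k j * ((∑ j', A k j' * x t j') - y k) + lam2 * x t j)
    (hxupd : ∀ t, ∀ z : Fin N → ℝ,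
      ηx t * l1norm (x (t + 1))
          + 1 / 2 * sqnorm (fun j => x (t + 1) j - (x t j - ηx t * G t j))
        ≤ ηx t * l1norm z + 1 / 2 * sqnorm (fun j => z j - (x t j - ηx t * G t j)))
    (hgbound : ∀ t ≤ T, Real.sqrt (sqnorm (g t)) ≤ Rg) :
    (∑ t ∈ Finset.range T, sqnorm (x (t + 1) - x t)) / T
      ≤ 2 * LRfun (p 0) (x 0) / (Lh * T)
        + 2 * Rg ^ 2 / (Lh * T)
            * ∑ t ∈ Finset.range T, (ηp t + lam3 * (ηp t) ^ 2 / 2) := by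
  have hpmem : ∀ t, p t ∈ stdSimplex' L := fun t => by
    cases t with
    | zero => exact hp0
    | succ t => exact (hpupd t).1
  -- Weights on the simplex sum to one, so the terms of `f` shared by all `i` come out of the sum.
  have hLR : ∀ r ∈ stdSimplex' L, ∀ z, LRfun r z = l1norm z + ((∑ i, r i * h i z)
      + lam1 / 2 * sqnorm (fun k => y k - ∑ j, A k j * z j) + lam2 / 2 * sqnorm z)
      + lam3 / 2 * sqnorm (r - q) := fun r hr z => by
    have h1 : ∀ i, r i * f i z = r i * h i z + r i * (l1norm z
        + lam1 / 2 * sqnorm (fun k => y k - ∑ j, A k j * z j) + lam2 / 2 * sqnorm z) := fun i => by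
      rw [hf]; ring
    rw [hLRfun]
    simp only [h1]
    rw [Finset.sum_add_distrib, ← Finset.sum_mul, hr.2]
    ring
  have hLR0 : ∀ r ∈ stdSimplex' L, ∀ z, 0 ≤ LRfun r z := fun r hr z => by
    rw [hLR r hr z]
    have h1 : 0 ≤ ∑ i, r i * h i z :=
      Finset.sum_nonneg fun i _ => mul_nonneg (hr.1 i) (hnonneg i z)
    have h2 := l1norm_nonneg z
    have h3 := sqnorm_nonneg (fun k => y k - ∑ j, A k j * z j)
    have h4 := sqnorm_nonneg z
    have h5 := sqnorm_nonneg (r - q)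
    positivity
  have hxstep : ∀ t, LRfun (p t) (x (t + 1)) + Lh / 2 * sqnorm (x (t + 1) - x t)
      ≤ LRfun (p t) (x t) := fun t => by
    have h1 := prox_ineq (x t) (x (t + 1)) (G t) (ηx t) (hηx t) (hxupd t)
    have h2 := hsmooth (p t) (hpmem t) (x t) (x (t + 1))
    rw [fderiv_smoothPart A y lam1 lam2 h gradh hdiff hgrad] at h2
    simp only [← hG, Pi.sub_apply] at h2
    have h3 : sqnorm (x t - x (t + 1)) = sqnorm (x (t + 1) - x t) :=
      Finset.sum_congr rfl fun j _ => by simp only [Pi.sub_apply]; ring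
    rw [h3] at h2
    rw [hLR _ (hpmem t), hLR _ (hpmem t)]
    have hD := sqnorm_nonneg (x (t + 1) - x t)
    have h4 : Lh * ηx t ≤ 1 := by
      have := mul_le_mul_of_nonneg_left (hηxLh t) hLh.le
      rwa [mul_one_div_cancel hLh.ne'] at this
    -- Dividing the proximal inequality by `ηx t`, using `Lh ≤ 1 / ηx t`.
    have h5 : Lh * sqnorm (x (t + 1) - x t) + ∑ j, G t j * (x (t + 1) j - x t j)
        ≤ l1norm (x t) - l1norm (x (t + 1)) := by
      refine le_of_mul_le_mul_left ?_ (hηx t)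
      nlinarith [mul_le_mul_of_nonneg_right h4 hD]
    linarith
  have hpstep : ∀ t < T, LRfun (p (t + 1)) (x (t + 1))
      ≤ LRfun (p t) (x (t + 1)) + ηp t * Rg ^ 2 := fun t ht => by
    have h1 := proj_step_le (p t) (p (t + 1)) (g t) (ηp t) (hηp t) (hpmem t) (hpmem (t + 1))
      (hpupd t).2
    have h2 := sum_mul_le_of_sqnorm (g (t + 1)) (fun i => p (t + 1) i - p t i)
    have h3 := hgbound t ht.le
    have h4 := hgbound (t + 1) ht
    have hRg : 0 ≤ Rg := (Real.sqrt_nonneg _).trans h3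
    have h5 : LRfun (p (t + 1)) (x (t + 1)) = LRfun (p t) (x (t + 1))
        + ∑ i, g (t + 1) i * (p (t + 1) i - p t i)
        - lam3 / 2 * sqnorm (fun i => p (t + 1) i - p t i) := by
      rw [hLRfun, hLRfun]
      simp only [hg, sqnorm, Pi.sub_apply, Finset.mul_sum]
      rw [← Finset.sum_add_distrib, ← Finset.sum_add_distrib, ← Finset.sum_add_distrib,
        ← Finset.sum_sub_distrib]
      exact Finset.sum_congr rfl fun i _ => by ring
    have h6 : √(sqnorm (fun i => p (t + 1) i - p t i)) ≤ ηp t * Rg :=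
      h1.trans (mul_le_mul_of_nonneg_left h3 (hηp t))
    have h7 := mul_le_mul h4 h6 (Real.sqrt_nonneg _) hRg
    have h8 : 0 ≤ lam3 / 2 * sqnorm (fun i => p (t + 1) i - p t i) :=
      mul_nonneg (by positivity) (sqnorm_nonneg _)
    nlinarith
  have htel : ∀ n ≤ T, Lh / 2 * (∑ t ∈ Finset.range n, sqnorm (x (t + 1) - x t))
      + LRfun (p n) (x n) ≤ LRfun (p 0) (x 0) + Rg ^ 2 * ∑ t ∈ Finset.range n, ηp t := fun n => by
    induction n with
    | zero => simp
    | succ n ih =>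
      intro hn
      rw [Finset.sum_range_succ, Finset.sum_range_succ]
      have h1 := ih (by omega)
      have h2 := hxstep n
      have h3 := hpstep n (by omega)
      linarith
  have h1 := htel T le_rfl
  have h2 := hLR0 _ (hpmem T) (x T)
  have h3 : ∑ t ∈ Finset.range T, ηp t
      ≤ ∑ t ∈ Finset.range T, (ηp t + lam3 * (ηp t) ^ 2 / 2) :=
    Finset.sum_le_sum fun t _ => by
      have : 0 ≤ lam3 * (ηp t) ^ 2 / 2 := by positivity
      linarith
  have h4 := mul_le_mul_of_nonneg_left h3 (sq_nonneg Rg)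
  have hT' : (0 : ℝ) < T := by exact_mod_cast hT
  have h5 : 2 * LRfun (p 0) (x 0) / (Lh * T)
        + 2 * Rg ^ 2 / (Lh * T)
            * ∑ t ∈ Finset.range T, (ηp t + lam3 * (ηp t) ^ 2 / 2)
      = (2 * (LRfun (p 0) (x 0)
        + Rg ^ 2 * ∑ t ∈ Finset.range T, (ηp t + lam3 * (ηp t) ^ 2 / 2)) / Lh) / T := by
    generalize ∑ t ∈ Finset.range T, (ηp t + lam3 * (ηp t) ^ 2 / 2) = S
    field_simp
  rw [h5]
  refine div_le_div_of_nonneg_right ?_ hT'.le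
  rw [le_div_iff₀ hLh]
  linarith
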